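/- arXiv:1012.3271 — 2 statements merged into one kernel-verified Lean document; each statement's English description precedes it below -/
import Mathlib

section
/- Let f ∈ ℝ[x₁,…,xₙ] with deg f ≤ 2d. Then ρ_d(f) = max{ −L(f) : L a linear functional on polynomials of degree at most 2d with L(g²) ≥ 0 for all g of degree at most d, and |L(x^α)| ≤ 1 for all |α| ≤ 2d }, and this maximum is attained by some such functional L*. -/
open MvPolynomial Finset

/-- The ℓ₁-norm of the coefficient vector of a polynomial. -/
noncomputable def l1Norm {n : ℕ} (f : MvPolynomial (Fin n) ℝ) : ℝ :=
  ∑ α ∈ f.support, |f.coeff α|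

/-- `IsSOS d g` : `g` is a sum of squares of polynomials of degree at most `d`
(i.e. `g ∈ Σ[x]_d`). -/
def IsSOS {n : ℕ} (d : ℕ) (g : MvPolynomial (Fin n) ℝ) : Prop :=
  ∃ (k : ℕ) (h : Fin k → MvPolynomial (Fin n) ℝ),
    (∀ i, (h i).totalDegree ≤ d) ∧ g = ∑ i, (h i) ^ 2

/-- `rho d f = inf {‖f - g‖₁ : g ∈ Σ[x]_d}`. -/
noncomputable def rho {n : ℕ} (d : ℕ) (f : MvPolynomial (Fin n) ℝ) : ℝ :=
  sInf {r : ℝ | ∃ g, IsSOS d g ∧ r = l1Norm (f - g)}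

theorem l1_superset {n : ℕ} (f : MvPolynomial (Fin n) ℝ) (s : Finset (Fin n →₀ ℕ))
    (h : f.support ⊆ s) : l1Norm f = ∑ α ∈ s, |f.coeff α| := by
  unfold l1Norm
  apply Finset.sum_subset h
  intro x _ hx
  simp [MvPolynomial.notMem_support_iff.mp hx]

theorem l1_nonneg {n : ℕ} (f : MvPolynomial (Fin n) ℝ) : 0 ≤ l1Norm f :=
  Finset.sum_nonneg fun _ _ => abs_nonneg _

theorem l1_add {n : ℕ} (f g : MvPolynomial (Fin n) ℝ) :
    l1Norm (f + g) ≤ l1Norm f + l1Norm g := by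
  classical
  rw [l1_superset (f + g) (f.support ∪ g.support) MvPolynomial.support_add,
    l1_superset f (f.support ∪ g.support) Finset.subset_union_left,
    l1_superset g (f.support ∪ g.support) Finset.subset_union_right, ← Finset.sum_add_distrib]
  apply Finset.sum_le_sum
  intro i _
  rw [MvPolynomial.coeff_add]
  exact abs_add_le _ _

theorem l1_smul {n : ℕ} (c : ℝ) (f : MvPolynomial (Fin n) ℝ) :
    l1Norm (c • f) = |c| * l1Norm f := by
  rw [l1_superset (c • f) f.support MvPolynomial.support_smul, l1Norm, Finset.mul_sum]
  simp [abs_mul]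

theorem sos_zero {n : ℕ} (d : ℕ) : IsSOS d (0 : MvPolynomial (Fin n) ℝ) :=
  ⟨0, fun _ => 0, by simp, by simp⟩

theorem sos_sq {n : ℕ} (d : ℕ) (g : MvPolynomial (Fin n) ℝ) (h : g.totalDegree ≤ d) :
    IsSOS d (g ^ 2) :=
  ⟨1, fun _ => g, by simpa using h, by simp⟩

theorem sos_add {n : ℕ} (d : ℕ) (f g : MvPolynomial (Fin n) ℝ) (hf : IsSOS d f)
    (hg : IsSOS d g) : IsSOS d (f + g) := by
  obtain ⟨k, a, ha, rfl⟩ := hf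
  obtain ⟨l, b, hb, rfl⟩ := hg
  refine ⟨k + l, Fin.append a b, ?_, ?_⟩
  · intro i
    refine Fin.addCases (fun i => ?_) (fun i => ?_) i
    · simpa using ha i
    · simpa using hb i
  · simp [Fin.sum_univ_add]

theorem sos_smul {n : ℕ} (d : ℕ) (c : ℝ) (hc : 0 ≤ c) (f : MvPolynomial (Fin n) ℝ)
    (hf : IsSOS d f) : IsSOS d (c • f) := by
  obtain ⟨k, a, ha, rfl⟩ := hf
  refine ⟨k, fun i => Real.sqrt c • a i, fun i => ?_, ?_⟩
  · exact (MvPolynomial.totalDegree_smul_le _ _).trans (ha i)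
  · simp [smul_pow, Real.sq_sqrt hc, Finset.smul_sum]

theorem rho_le {n : ℕ} (d : ℕ) (f g : MvPolynomial (Fin n) ℝ) (hg : IsSOS d g) :
    rho d f ≤ l1Norm (f - g) :=
  csInf_le ⟨0, by rintro _ ⟨g, _, rfl⟩; exact l1_nonneg _⟩ ⟨g, hg, rfl⟩

theorem le_rho {n : ℕ} (d : ℕ) (f : MvPolynomial (Fin n) ℝ) (r : ℝ)
    (h : ∀ g, IsSOS d g → r ≤ l1Norm (f - g)) : r ≤ rho d f :=
  le_csInf ⟨_, 0, sos_zero d, rfl⟩ (by rintro _ ⟨g, hg, rfl⟩; exact h g hg)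

theorem rho_add {n : ℕ} (d : ℕ) (f g : MvPolynomial (Fin n) ℝ) :
    rho d (f + g) ≤ rho d f + rho d g := by
  rw [← sub_le_iff_le_add]
  apply le_rho
  intro a ha
  rw [sub_le_comm]
  apply le_rho
  intro b hb
  have h1 := rho_le d (f + g) (a + b) (sos_add d a b ha hb)
  have h2 := l1_add (f - a) (g - b)
  rw [show f + g - (a + b) = f - a + (g - b) by ring] at h1
  linarith

theorem rho_smul_le {n : ℕ} (d : ℕ) (c : ℝ) (hc : 0 < c) (f : MvPolynomial (Fin n) ℝ) :
    rho d (c • f) ≤ c * rho d f := by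
  rw [← div_le_iff₀' hc]
  apply le_rho
  intro g hg
  rw [div_le_iff₀' hc]
  have h := rho_le d (c • f) (c • g) (sos_smul d c hc.le g hg)
  rwa [← smul_sub, l1_smul, abs_of_pos hc] at h

theorem rho_smul {n : ℕ} (d : ℕ) (c : ℝ) (hc : 0 < c) (f : MvPolynomial (Fin n) ℝ) :
    rho d (c • f) = c * rho d f := by
  apply le_antisymm (rho_smul_le d c hc f)
  have h := rho_smul_le d c⁻¹ (inv_pos.mpr hc) (c • f)
  rw [smul_smul, inv_mul_cancel₀ hc.ne', one_smul] at h
  rwa [le_inv_mul_iff₀ hc] at h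

theorem rho_zero {n : ℕ} (d : ℕ) : rho d (0 : MvPolynomial (Fin n) ℝ) = 0 := by
  have h := rho_smul d 2 two_pos (0 : MvPolynomial (Fin n) ℝ)
  rw [smul_zero] at h
  linarith

theorem sos_deg {n : ℕ} (d : ℕ) (g : MvPolynomial (Fin n) ℝ) (hg : IsSOS d g) :
    g.totalDegree ≤ 2 * d := by
  obtain ⟨k, a, ha, rfl⟩ := hg
  apply MvPolynomial.totalDegree_finsetSum_le
  intro i _
  exact (MvPolynomial.totalDegree_pow _ _).trans (Nat.mul_le_mul_left 2 (ha i))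

theorem weak_dual {n d : ℕ} (f : MvPolynomial (Fin n) ℝ)
    (hf : f.totalDegree ≤ 2 * d) (L : MvPolynomial (Fin n) ℝ →ₗ[ℝ] ℝ)
    (h1 : ∀ g : MvPolynomial (Fin n) ℝ, g.totalDegree ≤ d → 0 ≤ L (g ^ 2))
    (h2 : ∀ α : Fin n →₀ ℕ, α.degree ≤ 2 * d → |L (monomial α 1)| ≤ 1) :
    -L f ≤ rho d f := by
  apply le_rho
  intro g hg
  have hd : (f - g).totalDegree ≤ 2 * d :=
    (MvPolynomial.totalDegree_sub _ _).trans (max_le hf (sos_deg d g hg))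
  have hLg : 0 ≤ L g := by
    obtain ⟨k, a, ha, rfl⟩ := hg
    rw [map_sum]
    exact Finset.sum_nonneg fun i _ => h1 _ (ha i)
  have hb : |L (f - g)| ≤ l1Norm (f - g) := by
    generalize f - g = p at hd
    conv_lhs => rw [MvPolynomial.as_sum p]
    rw [map_sum]
    refine (Finset.abs_sum_le_sum_abs _ _).trans (Finset.sum_le_sum fun α hα => ?_)
    have hm : monomial α (p.coeff α) = p.coeff α • monomial α (1 : ℝ) := by
      simp [MvPolynomial.smul_monomial]
    rw [hm, map_smul, smul_eq_mul, abs_mul]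
    have hα2 : α.degree ≤ 2 * d := by
      refine le_trans ?_ hd
      have := MvPolynomial.le_totalDegree hα
      simpa [Finsupp.degree_apply, Finsupp.sum] using this
    exact mul_le_of_le_one_right (abs_nonneg _) (h2 α hα2)
  have := neg_abs_le (L (f - g))
  rw [map_sub] at *
  linarith

theorem l1_monomial {n : ℕ} (α : Fin n →₀ ℕ) (c : ℝ) : l1Norm (monomial α c) = |c| := by
  classical
  rw [l1_superset _ {α} MvPolynomial.support_monomial_subset]
  simp

theorem exists_L {n d : ℕ} (f : MvPolynomial (Fin n) ℝ) :
    ∃ L : MvPolynomial (Fin n) ℝ →ₗ[ℝ] ℝ, -L f = rho d f ∧ ∀ h, -L h ≤ rho d h := by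
  have key : ∃ L : MvPolynomial (Fin n) ℝ →ₗ[ℝ] ℝ, L f = rho d f ∧ ∀ h, L h ≤ rho d h := by
    by_cases h0 : f = 0
    · subst h0
      obtain ⟨L, -, hL⟩ := exists_extension_of_le_sublinear
        (⊥ : MvPolynomial (Fin n) ℝ →ₗ.[ℝ] ℝ) (rho d) (fun c hc x => rho_smul d c hc x)
        (rho_add d) (by
          rintro ⟨x, hx⟩
          have hx' : x = 0 := (Submodule.mem_bot ℝ).mp hx
          subst hx'
          rw [rho_zero]
          exact (LinearPMap.map_zero _).le)
      exact ⟨L, by simp [rho_zero], hL⟩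
    · obtain ⟨L, hL1, hL⟩ := exists_extension_of_le_sublinear
        (LinearPMap.mkSpanSingleton f (rho d f) h0) (rho d) (fun c hc x => rho_smul d c hc x)
        (rho_add d) (by
          rintro ⟨x, hx⟩
          obtain ⟨c, rfl⟩ := Submodule.mem_span_singleton.mp hx
          erw [LinearPMap.mkSpanSingleton'_apply]
          rw [smul_eq_mul, RingHom.id_apply]
          change c * rho d f ≤ rho d (c • f)
          rcases lt_trichotomy c 0 with hc | hc | hc
          · have h1 := rho_add d (c • f) ((-c) • f)
            rw [← add_smul, add_neg_cancel, zero_smul, rho_zero,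
              rho_smul d (-c) (neg_pos.mpr hc)] at h1
            linarith
          · simp [hc, rho_zero]
          · rw [rho_smul d c hc])
      refine ⟨L, ?_, hL⟩
      have h1 := hL1 ⟨f, Submodule.mem_span_singleton_self f⟩
      have h2 := LinearPMap.mkSpanSingleton_apply ℝ ℝ (σ := RingHom.id ℝ) h0 (rho d f)
      exact h1.trans h2
  obtain ⟨L, h1, h2⟩ := key
  exact ⟨-L, by simpa using h1, by simpa using h2⟩

/-- Strong duality with attainment: `ρ_d(f)` equals the maximum of `-L(f)` over all
linear functionals `L` with `L(g²) ≥ 0` for all `g` of degree at most `d` and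
`|L(x^α)| ≤ 1` for all `|α| ≤ 2d`, and this maximum is attained. -/
theorem rho_eq_max_dual {n d : ℕ} (f : MvPolynomial (Fin n) ℝ)
    (hf : f.totalDegree ≤ 2 * d) :
    ∃ L : MvPolynomial (Fin n) ℝ →ₗ[ℝ] ℝ,
      (∀ g : MvPolynomial (Fin n) ℝ, g.totalDegree ≤ d → 0 ≤ L (g ^ 2)) ∧
      (∀ α : Fin n →₀ ℕ, α.degree ≤ 2 * d → |L (monomial α 1)| ≤ 1) ∧
      rho d f = -L f ∧
      ∀ L' : MvPolynomial (Fin n) ℝ →ₗ[ℝ] ℝ,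
        (∀ g : MvPolynomial (Fin n) ℝ, g.totalDegree ≤ d → 0 ≤ L' (g ^ 2)) →
        (∀ α : Fin n →₀ ℕ, α.degree ≤ 2 * d → |L' (monomial α 1)| ≤ 1) →
        -L' f ≤ -L f := by
  obtain ⟨L, hL, hle⟩ := exists_L (d := d) f
  refine ⟨L, fun g hg => ?_, fun α _ => ?_, hL.symm, fun L' h1 h2 => ?_⟩
  · have h1 := (hle (g ^ 2)).trans (rho_le d _ _ (sos_sq d g hg))
    rw [sub_self] at h1
    have h2 : l1Norm (0 : MvPolynomial (Fin n) ℝ) = 0 := by simp [l1Norm]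
    linarith
  · have h1 := (hle (monomial α 1)).trans (rho_le d _ _ (sos_zero d))
    have h2 := (hle (monomial α (-1))).trans (rho_le d _ _ (sos_zero d))
    rw [sub_zero, l1_monomial] at h1 h2
    have h3 : (monomial α (-1 : ℝ)) = -(monomial α 1 : MvPolynomial (Fin n) ℝ) := by simp
    rw [h3, map_neg] at h2
    norm_num at h1 h2
    rw [abs_le]
    constructor <;> linarith
  · rw [hL]
    exact weak_dual f hf L' h1 h2
end

section
/- Let f ∈ ℝ[x₁,…,xₙ] with deg f ≤ 2d. Then ρ_d(f) = min{ Σ_{i=0}^n λᵢ : λ = (λ₀,…,λₙ) ∈ ℝ₊^{n+1}, f + λ₀ + Σ_{i=1}^n λᵢ xᵢ^{2d} ∈ Σ[x]_d }, and this minimum is attained by some nonnegative λ* ∈ ℝ₊^{n+1}. -/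
open MvPolynomial Finset

open Filter Topology

section SosCone

/-- Exponents of degree at most `d`. -/
abbrev Bd (n d : ℕ) : Type := {b : Fin n →₀ ℕ // b.degree ≤ d}

noncomputable instance instFintypeBd (n d : ℕ) : Fintype (Bd n d) :=
  (Finsupp.finite_of_degree_le (σ := Fin n) d).fintype

variable {n d : ℕ}

lemma totalDegree_le_of {p : MvPolynomial (Fin n) ℝ} {k : ℕ}
    (h : ∀ b, p.coeff b ≠ 0 → b.degree ≤ k) : p.totalDegree ≤ k := by
  rw [totalDegree]
  refine Finset.sup_le fun b hb => ?_
  exact h b (mem_support_iff.mp hb)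

lemma degree_le_of {p : MvPolynomial (Fin n) ℝ} {k : ℕ} (hp : p.totalDegree ≤ k)
    {b : Fin n →₀ ℕ} (hb : p.coeff b ≠ 0) : b.degree ≤ k :=
  (le_totalDegree (mem_support_iff.mpr hb)).trans hp

lemma totalDegree_mono_le (b : Fin n →₀ ℕ) (c : ℝ) {k : ℕ} (h : b.degree ≤ k) :
    (monomial b c : MvPolynomial (Fin n) ℝ).totalDegree ≤ k :=
  (totalDegree_monomial_le b c).trans h

/-- polynomial with coefficients `c`. -/
noncomputable def pol (c : Bd n d → ℝ) : MvPolynomial (Fin n) ℝ :=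
  ∑ b : Bd n d, monomial (b : Fin n →₀ ℕ) (c b)

lemma coeff_pol (c : Bd n d → ℝ) (b : Bd n d) : (pol c).coeff (b : Fin n →₀ ℕ) = c b := by
  classical
  simp only [pol, coeff_sum, coeff_monomial]
  simp [Subtype.val_inj]

lemma totalDegree_pol (c : Bd n d → ℝ) : (pol c).totalDegree ≤ d :=
  totalDegree_finsetSum_le fun b _ => totalDegree_mono_le _ _ b.2

lemma eq_pol {p : MvPolynomial (Fin n) ℝ} (hp : p.totalDegree ≤ d) :
    p = pol (fun b : Bd n d => p.coeff b) := by
  ext b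
  by_cases hb : b.degree ≤ d
  · exact (coeff_pol (fun b : Bd n d => p.coeff b) ⟨b, hb⟩).symm
  · have h1 : p.coeff b = 0 := by
      by_contra h; exact hb (degree_le_of hp h)
    have h2 : (pol (fun b : Bd n d => p.coeff b)).coeff b = 0 := by
      by_contra h; exact hb (degree_le_of (totalDegree_pol _) h)
    rw [h1, h2]

lemma pol_sq (c : Bd n d → ℝ) :
    (pol c) ^ 2 = ∑ a : Bd n d, ∑ b : Bd n d,
      monomial ((a : Fin n →₀ ℕ) + (b : Fin n →₀ ℕ)) (c a * c b) := by
  simp [pol, sq, Finset.sum_mul_sum, monomial_mul]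

/-- sum of squares of the rows -/
noncomputable def sosOf (D : Bd n d → Bd n d → ℝ) : MvPolynomial (Fin n) ℝ :=
  ∑ i, (pol (D i)) ^ 2

lemma sum_pol_sq {ι : Type*} [Fintype ι] (D : Matrix ι (Bd n d) ℝ) :
    ∑ i, (pol (D i)) ^ 2 = ∑ a : Bd n d, ∑ b : Bd n d,
      monomial ((a : Fin n →₀ ℕ) + (b : Fin n →₀ ℕ)) ((D.conjTranspose * D) a b) := by
  simp only [pol_sq]
  rw [Finset.sum_comm]
  refine Finset.sum_congr rfl fun a _ => ?_
  rw [Finset.sum_comm]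
  refine Finset.sum_congr rfl fun b _ => ?_
  simp [Matrix.mul_apply]

open scoped MatrixOrder ComplexOrder in
lemma isSOS_iff {g : MvPolynomial (Fin n) ℝ} :
    IsSOS d g ↔ ∃ D : Bd n d → Bd n d → ℝ, g = sosOf D := by
  classical
  constructor
  · rintro ⟨k, h, hd, rfl⟩
    let A : Matrix (Fin k) (Bd n d) ℝ := fun i b => (h i).coeff b
    have hA : ∑ i, h i ^ 2 = ∑ i, (pol (A i)) ^ 2 :=
      Finset.sum_congr rfl fun i _ => by rw [eq_pol (hd i)]
    obtain ⟨B, hB⟩ := CStarAlgebra.nonneg_iff_eq_star_mul_self.mp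
      (Matrix.posSemidef_conjTranspose_mul_self A).nonneg
    refine ⟨B, ?_⟩
    change _ = ∑ i, (pol ((B : Matrix (Bd n d) (Bd n d) ℝ) i)) ^ 2
    rw [hA, sum_pol_sq, sum_pol_sq, hB]
    rfl
  · rintro ⟨D, rfl⟩
    let e := (Fintype.equivFin (Bd n d)).symm
    refine ⟨_, fun i => pol (D (e i)), fun i => totalDegree_pol _, ?_⟩
    exact (Equiv.sum_comp e (fun i => (pol (D i)) ^ 2)).symm

lemma IsSOS.add {p q : MvPolynomial (Fin n) ℝ} (hp : IsSOS d p) (hq : IsSOS d q) :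
    IsSOS d (p + q) := by
  obtain ⟨k, h, hd, rfl⟩ := hp
  obtain ⟨k', h', hd', rfl⟩ := hq
  refine ⟨k + k', Fin.append h h', fun i => ?_, ?_⟩
  · refine Fin.addCases (fun i => ?_) (fun i => ?_) i <;> simp [hd, hd']
  · simp [Fin.sum_univ_add]

lemma IsSOS.zero : IsSOS d (0 : MvPolynomial (Fin n) ℝ) :=
  ⟨0, fun _ => 0, fun i => i.elim0, by simp⟩

lemma IsSOS.sq {p : MvPolynomial (Fin n) ℝ} (hp : p.totalDegree ≤ d) : IsSOS d (p ^ 2) :=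
  ⟨1, fun _ => p, fun _ => hp, by simp⟩

lemma IsSOS.smul {p : MvPolynomial (Fin n) ℝ} (hp : IsSOS d p) {c : ℝ} (hc : 0 ≤ c) :
    IsSOS d (c • p) := by
  obtain ⟨k, h, hd, rfl⟩ := hp
  refine ⟨k, fun i => (Real.sqrt c) • h i, fun i => (totalDegree_smul_le _ _).trans (hd i), ?_⟩
  rw [Finset.smul_sum]
  refine Finset.sum_congr rfl fun i _ => ?_
  rw [smul_pow, Real.sq_sqrt hc]

lemma IsSOS.sum {ι : Type*} (s : Finset ι) (p : ι → MvPolynomial (Fin n) ℝ)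
    (h : ∀ i ∈ s, IsSOS d (p i)) : IsSOS d (∑ i ∈ s, p i) :=
  Finset.sum_induction p (IsSOS d) (fun _ _ => IsSOS.add) IsSOS.zero h

lemma IsSOS.totalDegree_le {p : MvPolynomial (Fin n) ℝ} (hp : IsSOS d p) :
    p.totalDegree ≤ 2 * d := by
  obtain ⟨k, h, hd, rfl⟩ := hp
  exact totalDegree_finsetSum_le fun i _ => (totalDegree_pow _ _).trans
    (Nat.mul_le_mul_left 2 (hd i))

lemma continuous_coeff_sosOf (α : Fin n →₀ ℕ) :
    Continuous fun D : Bd n d → Bd n d → ℝ => (sosOf D).coeff α := by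
  classical
  simp only [sosOf, pol_sq, coeff_sum, coeff_monomial]
  refine continuous_finsetSum _ fun i _ => continuous_finsetSum _ fun a _ =>
    continuous_finsetSum _ fun b _ => ?_
  split_ifs
  · fun_prop
  · fun_prop

lemma sosOf_eq_zero {D : Bd n d → Bd n d → ℝ} (h : sosOf D = 0) : D = 0 := by
  have h1 : ∀ i, pol (D i) = 0 := by
    intro i
    apply MvPolynomial.funext
    intro x
    have := congrArg (eval x) h
    simp only [sosOf, map_sum, map_pow, map_zero] at this
    rw [Finset.sum_eq_zero_iff_of_nonneg (fun i _ => sq_nonneg _)] at this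
    simpa using this i (Finset.mem_univ i)
  funext i b
  rw [← coeff_pol (D i) b, h1 i]; simp

lemma sosOf_smul (c : ℝ) (D : Bd n d → Bd n d → ℝ) : sosOf (c • D) = (c ^ 2) • sosOf D := by
  have h : ∀ i, pol ((c • D) i) = c • pol (D i) := by
    intro i
    simp [pol, Finset.smul_sum, smul_monomial]
  simp only [sosOf, h, Finset.smul_sum, smul_pow]

/-- finite coefficient norm -/
noncomputable def Nn (d : ℕ) (p : MvPolynomial (Fin n) ℝ) : ℝ :=
  ∑ α : Bd n (2 * d), |p.coeff α|

lemma totalDegree_sosOf (D : Bd n d → Bd n d → ℝ) : (sosOf D).totalDegree ≤ 2 * d :=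
  (isSOS_iff.mpr ⟨D, rfl⟩ : IsSOS d _).totalDegree_le

lemma exists_bound : ∃ c : ℝ, 0 < c ∧ ∀ D : Bd n d → Bd n d → ℝ,
    c * ‖D‖ ^ 2 ≤ Nn d (sosOf D) := by
  have hcont : Continuous fun D : Bd n d → Bd n d → ℝ => Nn d (sosOf D) :=
    continuous_finsetSum _ fun α _ => (continuous_coeff_sosOf _).abs
  have hpos : ∀ D : Bd n d → Bd n d → ℝ, D ≠ 0 → 0 < Nn d (sosOf D) := by
    intro D hD
    have h0 : 0 ≤ Nn d (sosOf D) := Finset.sum_nonneg fun _ _ => abs_nonneg _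
    refine lt_of_le_of_ne h0 fun h => hD (sosOf_eq_zero ?_)
    rw [eq_comm, Nn, Finset.sum_eq_zero_iff_of_nonneg (fun _ _ => abs_nonneg _)] at h
    ext α
    by_contra hα
    exact hα (by simpa using h ⟨α, degree_le_of (totalDegree_sosOf D) hα⟩ (Finset.mem_univ _))
  have hnontriv : Nontrivial (Bd n d → Bd n d → ℝ) := by
    have : Nonempty (Bd n d) := ⟨⟨0, by simp⟩⟩
    infer_instance
  obtain ⟨D₀, hD₀, hmin⟩ := (isCompact_sphere (0 : Bd n d → Bd n d → ℝ) 1).exists_isMinOn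
    (NormedSpace.sphere_nonempty.mpr zero_le_one) hcont.continuousOn
  have hD₀' : D₀ ≠ 0 := by
    rintro rfl; simp at hD₀
  refine ⟨_, hpos D₀ hD₀', fun D => ?_⟩
  by_cases hD : D = 0
  · subst hD
    have : 0 ≤ Nn d (sosOf (0 : Bd n d → Bd n d → ℝ)) := Finset.sum_nonneg fun _ _ => abs_nonneg _
    simpa using this
  · have hn : ‖D‖ ≠ 0 := norm_ne_zero_iff.mpr hD
    have hm : Nn d (sosOf D₀) ≤ Nn d (sosOf (‖D‖⁻¹ • D)) :=
      hmin (by simp [norm_smul, hn])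
    have e : Nn d (sosOf (‖D‖⁻¹ • D)) = (‖D‖⁻¹) ^ 2 * Nn d (sosOf D) := by
      rw [sosOf_smul]
      simp [Nn, Finset.mul_sum, abs_mul]
    rw [e] at hm
    calc _ ≤ ((‖D‖⁻¹) ^ 2 * Nn d (sosOf D)) * ‖D‖ ^ 2 := by gcongr
      _ = _ := by field_simp

lemma isClosed_sos {E : Type*} [TopologicalSpace E] [SequentialSpace E]
    (P : E → MvPolynomial (Fin n) ℝ) (hP : ∀ α, Continuous fun v => (P v).coeff α) :
    IsClosed {v | IsSOS d (P v)} := by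
  apply IsSeqClosed.isClosed
  intro v v₀ hv hlim
  simp only [Set.mem_ofPred_eq, isSOS_iff] at hv
  choose D hD using hv
  obtain ⟨c, hc, hb⟩ := exists_bound (n := n) (d := d)
  have hNc : Continuous fun v => Nn d (P v) :=
    continuous_finsetSum _ fun α _ => (hP _).abs
  obtain ⟨M, hM⟩ := ((hNc.tendsto v₀).comp hlim).bddAbove_range
  have hbd : ∀ k, D k ∈ Metric.closedBall (0 : Bd n d → Bd n d → ℝ) (Real.sqrt (M / c)) := by
    intro k
    rw [mem_closedBall_zero_iff]
    apply Real.le_sqrt_of_sq_le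
    rw [le_div_iff₀ hc, mul_comm]
    refine (hb _).trans ?_
    rw [← hD k]
    exact hM ⟨k, rfl⟩
  obtain ⟨D₀, -, φ, hφ, hDlim⟩ := tendsto_subseq_of_bounded Metric.isBounded_closedBall hbd
  refine isSOS_iff.mpr ⟨D₀, ?_⟩
  ext α
  have h1 := ((hP α).tendsto v₀).comp (hlim.comp hφ.tendsto_atTop)
  have h2 := ((continuous_coeff_sosOf α).tendsto D₀).comp hDlim
  refine tendsto_nhds_unique h1 (h2.congr fun k => ?_)
  simp [hD]

end SosCone

section Domination

variable {n d : ℕ}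

/-- the vertex monomials `1, x₁^{2d}, …, xₙ^{2d}` -/
noncomputable def vexp (n d : ℕ) : Fin (n + 1) → (Fin n →₀ ℕ) :=
  Fin.cons 0 (fun i => Finsupp.single i (2 * d))

/-- the combination of vertex monomials -/
noncomputable def Wt (d : ℕ) (l : Fin (n + 1) → ℝ) : MvPolynomial (Fin n) ℝ :=
  ∑ i, l i • monomial (vexp n d i) (1 : ℝ)

lemma Wt_eq (l : Fin (n + 1) → ℝ) :
    Wt d l = C (l 0) + ∑ i : Fin n, C (l i.succ) * X i ^ (2 * d) := by
  rw [Wt, Fin.sum_univ_succ]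
  simp only [vexp, Fin.cons_zero, Fin.cons_succ, smul_monomial, smul_eq_mul, mul_one,
    C_mul_X_pow_eq_monomial]
  rfl

lemma Wt_add (l m : Fin (n + 1) → ℝ) : Wt d (l + m) = Wt d l + Wt d m := by
  simp [Wt, add_smul, Finset.sum_add_distrib]

lemma Wt_smul (c : ℝ) (l : Fin (n + 1) → ℝ) : Wt d (c • l) = c • Wt d l := by
  simp [Wt, Finset.smul_sum, mul_smul]

lemma Wt_sum {ι : Type*} (s : Finset ι) (l : ι → Fin (n + 1) → ℝ) :
    Wt d (∑ i ∈ s, l i) = ∑ i ∈ s, Wt d (l i) := by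
  classical
  induction s using Finset.induction_on with
  | empty => simp [Wt]
  | insert a s ha ih => rw [Finset.sum_insert ha, Finset.sum_insert ha, Wt_add, ih]

lemma Wt_single (i : Fin (n + 1)) :
    Wt d (Pi.single i (1 : ℝ)) = monomial (vexp n d i) (1 : ℝ) := by
  classical
  simp [Wt, Pi.single_apply, ite_smul]

/-- the potential -/
def Vp (b : Fin n →₀ ℕ) : ℝ := ∑ i, ((b i : ℝ)) ^ 2

lemma Vp_lt {a b c : Fin n →₀ ℕ} (h : b + c = a + a) (hne : b ≠ c) :
    Vp a + Vp a < Vp b + Vp c := by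
  simp only [Vp, ← Finset.sum_add_distrib]
  have hh : ∀ i, (b i : ℝ) + c i = a i + a i := fun i => by
    exact_mod_cast DFunLike.congr_fun h i
  refine Finset.sum_lt_sum (fun i _ => ?_) ?_
  · nlinarith [hh i, sq_nonneg ((b i : ℝ) - c i)]
  · obtain ⟨i, hi⟩ := DFunLike.ne_iff.mp hne
    refine ⟨i, Finset.mem_univ i, ?_⟩
    have : 0 < ((b i : ℝ) - c i) ^ 2 := by
      apply sq_pos_of_ne_zero
      rw [sub_ne_zero]; exact_mod_cast hi
    nlinarith [hh i]

lemma exists_move (a : Fin n →₀ ℕ) (hd : a.degree ≤ d) (h0 : a ≠ 0)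
    (h1 : ∀ i, a ≠ Finsupp.single i d) :
    ∃ b c : Fin n →₀ ℕ, b.degree ≤ d ∧ c.degree ≤ d ∧ b + c = a + a ∧ b ≠ c := by
  classical
  obtain ⟨i, hi⟩ := DFunLike.ne_iff.mp h0
  simp only [Finsupp.coe_zero, Pi.zero_apply] at hi
  by_cases hj : ∃ j, j ≠ i ∧ a j ≠ 0
  · obtain ⟨j, hji, hj⟩ := hj
    have hle : Finsupp.single i 1 + Finsupp.single j 1 ≤ a := by
      intro k
      simp only [Finsupp.add_apply, Finsupp.single_apply]
      split_ifs <;> grind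
    obtain ⟨r, rfl⟩ := exists_add_of_le hle
    refine ⟨r + Finsupp.single i 2, r + Finsupp.single j 2, ?_, ?_, ?_, ?_⟩
    · simp only [map_add, Finsupp.degree_single] at hd ⊢; omega
    · simp only [map_add, Finsupp.degree_single] at hd ⊢; omega
    · ext k
      simp only [Finsupp.add_apply, Finsupp.single_apply]
      split_ifs <;> omega
    · intro h
      have := DFunLike.congr_fun h i
      simp [hji] at this
  · push Not at hj
    have ha : a = Finsupp.single i (a i) := by
      ext k
      by_cases hk : k = i
      · subst hk; simp
      · rw [hj k hk]; simp [Ne.symm hk]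
    generalize a i = m at ha hi
    subst ha
    rw [Finsupp.degree_single] at hd
    have hm : m ≠ d := fun h => h1 i (by rw [h])
    refine ⟨Finsupp.single i (m - 1), Finsupp.single i (m + 1), ?_, ?_, ?_, ?_⟩
    · rw [Finsupp.degree_single]; omega
    · rw [Finsupp.degree_single]; omega
    · rw [← Finsupp.single_add, ← Finsupp.single_add]; congr 1; omega
    · intro h
      have := DFunLike.congr_fun h i
      simp at this

lemma dominate (b : Bd n d) : ∃ l : Fin (n + 1) → ℝ, (∀ i, 0 ≤ l i) ∧ ∑ i, l i = 1 ∧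
    IsSOS d (Wt d l - monomial (b.1 + b.1) (1 : ℝ)) := by
  classical
  let q : Bd n d → MvPolynomial (Fin n) ℝ := fun a => monomial (a.1 + a.1) (1 : ℝ)
  let S : Set (Bd n d → ℝ) := {w | IsSOS d (∑ a, w a • q a - q b)}
  have hS : IsClosed S := by
    refine isClosed_sos _ fun α => ?_
    simp only [coeff_sub, coeff_sum, coeff_smul]
    fun_prop
  have hK : IsCompact (stdSimplex ℝ (Bd n d) ∩ S) := (isCompact_stdSimplex ℝ _).inter_right hS
  have hne : (stdSimplex ℝ (Bd n d) ∩ S).Nonempty := by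
    refine ⟨Pi.single b 1, single_mem_stdSimplex ℝ b, ?_⟩
    have : ∑ a, (Pi.single b (1 : ℝ) : Bd n d → ℝ) a • q a - q b = 0 := by
      simp [Pi.single_apply, ite_smul]
    change IsSOS d _
    rw [this]
    exact IsSOS.zero
  obtain ⟨w, ⟨hw, hwS⟩, hmax⟩ := hK.exists_isMaxOn hne
    (f := fun w : Bd n d → ℝ => ∑ a, w a * Vp (a : Fin n →₀ ℕ)) (by fun_prop)
  have hvert : ∀ a : Bd n d, ∃ l : Fin (n + 1) → ℝ, (∀ i, 0 ≤ l i) ∧ ∑ i, l i = 1 ∧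
      w a • Wt d l = w a • q a := by
    intro a
    by_cases h0 : (a : Fin n →₀ ℕ) = 0
    · refine ⟨Pi.single 0 1, fun i => ?_, by simp, ?_⟩
      · by_cases h : i = 0 <;> simp [Pi.single_apply, h]
      · rw [Wt_single]; simp [q, h0, vexp]
    by_cases h1 : ∃ i, (a : Fin n →₀ ℕ) = Finsupp.single i d
    · obtain ⟨i, hi⟩ := h1
      refine ⟨Pi.single i.succ 1, fun j => ?_, by simp, ?_⟩
      · by_cases h : j = i.succ <;> simp [Pi.single_apply, h]
      · rw [Wt_single]; simp [q, hi, vexp, ← Finsupp.single_add, two_mul]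
    push Not at h1
    refine ⟨Pi.single 0 1, fun i => ?_, by simp, ?_⟩
    · by_cases h : i = 0 <;> simp [Pi.single_apply, h]
    have hwa : w a = 0 := by
      by_contra hwa
      have hpos : 0 < w a := lt_of_le_of_ne (hw.1 a) (Ne.symm hwa)
      obtain ⟨b', c', hb', hc', hsum, hne'⟩ := exists_move a.1 a.2 h0 h1
      have hV := Vp_lt hsum hne'
      let B : Bd n d := ⟨b', hb'⟩
      let G : Bd n d := ⟨c', hc'⟩
      let w' : Bd n d → ℝ := fun x => w x + w a * ((1 / 2) * (Pi.single B 1 : Bd n d → ℝ) x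
        + (1 / 2) * (Pi.single G 1 : Bd n d → ℝ) x - (Pi.single a 1 : Bd n d → ℝ) x)
      have key : ∀ φ : Bd n d → ℝ, ∑ x, w' x * φ x = ∑ x, w x * φ x
          + w a * ((1 / 2) * φ B + (1 / 2) * φ G - φ a) := by
        intro φ
        have e : ∀ x, w' x * φ x = w x * φ x + ((w a * (1 / 2)) * ((Pi.single B 1 : Bd n d → ℝ) x * φ x)
          + (w a * (1 / 2)) * ((Pi.single G 1 : Bd n d → ℝ) x * φ x)
          - w a * ((Pi.single a 1 : Bd n d → ℝ) x * φ x)) := fun x => by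
            simp only [w']; ring
        simp only [e, Finset.sum_add_distrib, Finset.sum_sub_distrib, ← Finset.mul_sum]
        simp only [Pi.single_apply, ite_mul, one_mul, zero_mul, Finset.sum_ite_eq',
          Finset.mem_univ, if_true]
        ring
      have hw' : w' ∈ stdSimplex ℝ (Bd n d) := by
        refine ⟨fun x => ?_, ?_⟩
        · have h1 : 0 ≤ (Pi.single B 1 : Bd n d → ℝ) x := by
            rw [Pi.single_apply]; split_ifs <;> norm_num
          have h2 : 0 ≤ (Pi.single G 1 : Bd n d → ℝ) x := by
            rw [Pi.single_apply]; split_ifs <;> norm_num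
          have h3 : 0 ≤ w x - w a * (Pi.single a 1 : Bd n d → ℝ) x := by
            rw [Pi.single_apply]; split_ifs with h
            · rw [h]; simp
            · simpa using hw.1 x
          simp only [w']
          nlinarith [mul_nonneg hpos.le h1, mul_nonneg hpos.le h2]
        · have := key (fun _ => 1)
          simp only [mul_one] at this
          rw [this, hw.2]; norm_num
      have hw'S : w' ∈ S := by
        change IsSOS d _
        have e : ∑ x, w' x • q x - q b = (∑ x, w x • q x - q b)
            + (w a / 2) • (monomial b' (1 : ℝ) - monomial c' (1 : ℝ)) ^ 2 := by
          have e1 : (monomial b' (1 : ℝ) - monomial c' (1 : ℝ)) ^ 2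
              = q B + q G - (2 : ℝ) • q a := by
            have : q a = monomial b' (1 : ℝ) * monomial c' (1 : ℝ) := by
              simp [q, monomial_mul, hsum]
            rw [this]
            have h1 : q B = monomial b' (1 : ℝ) * monomial b' (1 : ℝ) := by
              simp [q, B, monomial_mul]
            have h2 : q G = monomial c' (1 : ℝ) * monomial c' (1 : ℝ) := by
              simp [q, G, monomial_mul]
            rw [h1, h2, two_smul]; ring
          rw [e1]
          ext α
          have := key (fun x => (q x).coeff α)
          simp only [coeff_sub, coeff_add, coeff_sum, coeff_smul, smul_eq_mul]
          rw [this]; ring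
        rw [e]
        refine IsSOS.add hwS (IsSOS.smul (IsSOS.sq ?_) (by positivity))
        refine (totalDegree_sub _ _).trans (max_le ?_ ?_)
        · exact totalDegree_mono_le _ _ hb'
        · exact totalDegree_mono_le _ _ hc'
      have hle : ∑ x, w' x * Vp (x : Fin n →₀ ℕ) ≤ ∑ x, w x * Vp (x : Fin n →₀ ℕ) :=
        hmax ⟨hw', hw'S⟩
      rw [key (fun x => Vp (x : Fin n →₀ ℕ))] at hle
      have : 0 < w a * ((1 / 2) * Vp b' + (1 / 2) * Vp c' - Vp (a : Fin n →₀ ℕ)) :=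
        mul_pos hpos (by linarith)
      simp only [B, G] at hle
      linarith
    rw [hwa, zero_smul, zero_smul]
  choose L hL0 hL1 hLq using hvert
  refine ⟨∑ a, w a • L a, fun i => ?_, ?_, ?_⟩
  · rw [Finset.sum_apply]
    exact Finset.sum_nonneg fun a _ => mul_nonneg (hw.1 a) (hL0 a i)
  · simp only [Finset.sum_apply, Pi.smul_apply, smul_eq_mul]
    rw [Finset.sum_comm]
    simp only [← Finset.mul_sum, hL1, mul_one]
    exact hw.2
  · have : Wt d (∑ a, w a • L a) = ∑ a, w a • q a := by
      rw [Wt_sum]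
      exact Finset.sum_congr rfl fun a _ => by rw [Wt_smul, hLq]
    rw [this]
    exact hwS

lemma dominate_monomial (α : Fin n →₀ ℕ) (hα : α.degree ≤ 2 * d) (c : ℝ) :
    ∃ l : Fin (n + 1) → ℝ, (∀ i, 0 ≤ l i) ∧ ∑ i, l i = |c| ∧
    IsSOS d (Wt d l + monomial α c) := by
  obtain ⟨b, g, hb, hg, rfl⟩ : ∃ b g : Fin n →₀ ℕ, b.degree ≤ d ∧ g.degree ≤ d ∧ b + g = α := by
    by_cases h : d ≤ α.degree
    · obtain ⟨b, hb, hbd⟩ := Finsupp.exists_le_degree_eq α d h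
      obtain ⟨g, rfl⟩ := exists_add_of_le hb
      refine ⟨b, g, hbd.le, ?_, rfl⟩
      rw [map_add] at hα; omega
    · exact ⟨α, 0, by omega, by simp, by simp⟩
  obtain ⟨l, hl0, hl1, hl⟩ := dominate (d := d) ⟨b, hb⟩
  obtain ⟨m, hm0, hm1, hm⟩ := dominate (d := d) ⟨g, hg⟩
  obtain ⟨s, hs, hsc⟩ : ∃ s : ℝ, s ^ 2 = 1 ∧ |c| * s = c := by
    rcases le_total 0 c with h | h
    · exact ⟨1, by norm_num, by rw [abs_of_nonneg h, mul_one]⟩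
    · exact ⟨-1, by norm_num, by rw [abs_of_nonpos h]; ring⟩
  refine ⟨(|c| / 2) • (l + m), fun i => ?_, ?_, ?_⟩
  · exact mul_nonneg (by positivity) (add_nonneg (hl0 i) (hm0 i))
  · simp only [Pi.smul_apply, Pi.add_apply, smul_eq_mul, ← Finset.mul_sum,
      Finset.sum_add_distrib, hl1, hm1]
    ring
  · have hsq : IsSOS d ((monomial b (1 : ℝ) + monomial g s) ^ 2) := by
      refine IsSOS.sq ((totalDegree_add _ _).trans (max_le ?_ ?_))
      · exact totalDegree_mono_le _ _ hb
      · exact totalDegree_mono_le _ _ hg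
    have := ((hl.add hm).add hsq).smul (c := |c| / 2) (by positivity)
    convert this using 1
    have e : (monomial b (1 : ℝ) + monomial g s) ^ 2
        = monomial (b + b) (1 : ℝ) + monomial (g + g) (1 : ℝ) + monomial (b + g) (2 * s) := by
      rw [add_sq, sq, sq, monomial_mul, monomial_mul, ← sq s, hs, mul_assoc, monomial_mul,
        two_mul, two_mul, map_add]
      simp only [one_mul]
      abel
    have e2 : monomial (b + g) c = (|c| / 2) • monomial (b + g) (2 * s) := by
      rw [smul_monomial]; congr 1
      rw [smul_eq_mul]; linarith
    rw [e, e2, Wt_smul, Wt_add, ← smul_add]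
    congr 1
    abel

lemma dominate_poly (h : MvPolynomial (Fin n) ℝ) (hh : h.totalDegree ≤ 2 * d) :
    ∃ l : Fin (n + 1) → ℝ, (∀ i, 0 ≤ l i) ∧ ∑ i, l i = l1Norm h ∧
    IsSOS d (Wt d l + h) := by
  have H : ∀ α : Fin n →₀ ℕ, ∃ l : Fin (n + 1) → ℝ, α ∈ h.support → ((∀ i, 0 ≤ l i) ∧
      ∑ i, l i = |h.coeff α| ∧ IsSOS d (Wt d l + monomial α (h.coeff α))) := by
    intro α
    by_cases hα : α ∈ h.support
    · obtain ⟨l, hl⟩ := dominate_monomial (d := d) α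
        (degree_le_of hh (mem_support_iff.mp hα)) (h.coeff α)
      exact ⟨l, fun _ => hl⟩
    · exact ⟨0, fun h => absurd h hα⟩
  choose L hL using H
  refine ⟨∑ α ∈ h.support, L α, fun i => ?_, ?_, ?_⟩
  · rw [Finset.sum_apply]
    exact Finset.sum_nonneg fun α hα => (hL α hα).1 i
  · simp only [Finset.sum_apply]
    rw [Finset.sum_comm]
    exact Finset.sum_congr rfl fun α hα => (hL α hα).2.1
  · have : Wt d (∑ α ∈ h.support, L α) + h
        = ∑ α ∈ h.support, (Wt d (L α) + monomial α (h.coeff α)) := by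
      rw [Finset.sum_add_distrib, Wt_sum, ← h.as_sum]
    rw [this]
    exact IsSOS.sum _ _ fun α hα => (hL α hα).2.2

lemma l1Norm_eq {p : MvPolynomial (Fin n) ℝ} {s : Finset (Fin n →₀ ℕ)} (hs : p.support ⊆ s) :
    l1Norm p = ∑ α ∈ s, |p.coeff α| := by
  refine Finset.sum_subset hs fun α _ hα => ?_
  rw [notMem_support_iff.mp hα, abs_zero]

lemma l1Norm_nonneg (p : MvPolynomial (Fin n) ℝ) : 0 ≤ l1Norm p :=
  Finset.sum_nonneg fun _ _ => abs_nonneg _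

lemma l1Norm_Wt_le (l : Fin (n + 1) → ℝ) (hl : ∀ i, 0 ≤ l i) :
    l1Norm (-(Wt d l)) ≤ ∑ i, l i := by
  classical
  simp only [l1Norm, support_neg, coeff_neg, abs_neg]
  calc ∑ α ∈ (Wt d l).support, |(Wt d l).coeff α|
      ≤ ∑ α ∈ (Wt d l).support, ∑ i, (if vexp n d i = α then l i else 0) := by
        refine Finset.sum_le_sum fun α _ => ?_
        simp only [Wt, coeff_sum, coeff_smul, coeff_monomial, smul_eq_mul, mul_ite, mul_one,
          mul_zero]
        rw [abs_of_nonneg]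
        exact Finset.sum_nonneg fun i _ => by split_ifs; exacts [hl i, le_rfl]
    _ = ∑ i, ∑ α ∈ (Wt d l).support, (if vexp n d i = α then l i else 0) := Finset.sum_comm
    _ ≤ ∑ i, l i := by
        refine Finset.sum_le_sum fun i _ => ?_
        rw [Finset.sum_ite_eq]
        split_ifs; exacts [le_rfl, hl i]

end Domination

/-- `ρ_d(f)` equals the minimum of `∑ᵢ lᵢ` over all nonnegative `l ∈ ℝ₊^{n+1}` with
`f + l₀ + ∑ᵢ lᵢ xᵢ^{2d} ∈ Σ[x]_d`, and this minimum is attained. -/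
theorem rho_eq_min_sos_shift {n d : ℕ} (f : MvPolynomial (Fin n) ℝ)
    (hf : f.totalDegree ≤ 2 * d) :
    ∃ l : Fin (n + 1) → ℝ, (∀ i, 0 ≤ l i) ∧
      IsSOS d (f + C (l 0) + ∑ i : Fin n, C (l i.succ) * X i ^ (2 * d)) ∧
      rho d f = ∑ i, l i ∧
      ∀ m : Fin (n + 1) → ℝ, (∀ i, 0 ≤ m i) →
        IsSOS d (f + C (m 0) + ∑ i : Fin n, C (m i.succ) * X i ^ (2 * d)) →
        ∑ i, l i ≤ ∑ i, m i := by
  have hW : ∀ m : Fin (n + 1) → ℝ,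
      f + C (m 0) + ∑ i : Fin n, C (m i.succ) * X i ^ (2 * d) = f + Wt d m := by
    intro m; rw [Wt_eq, add_assoc]
  simp only [hW]
  let A : Set (Fin (n + 1) → ℝ) := {l | (∀ i, 0 ≤ l i) ∧ IsSOS d (f + Wt d l)}
  have hAc : IsClosed A := by
    refine IsClosed.inter (s₁ := {l : Fin (n + 1) → ℝ | ∀ i, 0 ≤ l i}) ?_ ?_
    · exact isClosed_Ici (a := (0 : Fin (n + 1) → ℝ))
    · refine isClosed_sos _ fun α => ?_
      simp only [Wt, coeff_add, coeff_sum, coeff_smul]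
      fun_prop
  have step2 : ∀ g, IsSOS d g → ∃ l ∈ A, ∑ i, l i = l1Norm (f - g) := by
    intro g hg
    obtain ⟨l, h0, h1, h2⟩ := dominate_poly (d := d) (f - g)
      ((totalDegree_sub _ _).trans (max_le hf hg.totalDegree_le))
    refine ⟨l, ⟨h0, ?_⟩, h1⟩
    have := h2.add hg
    rwa [show Wt d l + (f - g) + g = f + Wt d l by ring] at this
  obtain ⟨l₀, hl₀, -⟩ := step2 0 IsSOS.zero
  obtain ⟨l, hlA, hmin⟩ : ∃ l ∈ A, ∀ m ∈ A, ∑ i, l i ≤ ∑ i, m i := by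
    let R := ∑ i, l₀ i
    have hcont : Continuous fun l : Fin (n + 1) → ℝ => ∑ i, l i := by fun_prop
    have hK : IsCompact (A ∩ {l | ∑ i, l i ≤ R}) := by
      refine IsCompact.of_isClosed_subset
        (isCompact_Icc (a := (0 : Fin (n + 1) → ℝ)) (b := fun _ => R))
        (hAc.inter (isClosed_le hcont continuous_const)) ?_
      rintro l ⟨hl, hlR⟩
      refine ⟨hl.1, fun i => ?_⟩
      exact (Finset.single_le_sum (fun j _ => hl.1 j) (Finset.mem_univ i)).trans hlR
    obtain ⟨l, ⟨hl, hlR⟩, hm⟩ := hK.exists_isMinOn ⟨l₀, hl₀, le_refl R⟩ hcont.continuousOn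
    refine ⟨l, hl, fun m hmA => ?_⟩
    by_cases h : ∑ i, m i ≤ R
    · exact hm ⟨hmA, h⟩
    · exact le_trans hlR (not_le.mp h).le
  refine ⟨l, hlA.1, hlA.2, le_antisymm ?_ ?_, fun m h0 h1 => hmin m ⟨h0, h1⟩⟩
  · have hb : BddBelow {r : ℝ | ∃ g, IsSOS d g ∧ r = l1Norm (f - g)} := by
      refine ⟨0, ?_⟩
      rintro r ⟨g, -, rfl⟩
      exact l1Norm_nonneg _
    refine (csInf_le hb ⟨_, hlA.2, rfl⟩).trans ?_
    rw [show f - (f + Wt d l) = -(Wt d l) by ring]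
    exact l1Norm_Wt_le l hlA.1
  · refine le_csInf ⟨_, 0, IsSOS.zero, rfl⟩ ?_
    rintro r ⟨g, hg, rfl⟩
    obtain ⟨m, hm, hme⟩ := step2 g hg
    exact (hmin m hm).trans hme.le
end
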